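/- Let X and Y be standard Borel spaces and let P and Q be probability measures on X × Y with M = (1/2)(P + Q). Denote by P_Y, Q_Y the marginals on Y, and by P(·|y), Q(·|y) the conditional distributions on X given y. Then the Jensen–Shannon divergence satisfies D_JS(P‖Q) ≤ D_JS(P_Y‖Q_Y) + ∫_Y D_JS(P(·|y)‖Q(·|y)) dP_Y(y) + ∫_Y D_JS(P(·|y)‖Q(·|y)) dQ_Y(y). -/

import Mathlib

open MeasureTheory ProbabilityTheory
open scoped ENNReal Classical

/-- Kullback–Leibler divergence between two measures, with values in `[0, ∞]`. -/
noncomputable def klDiv {Z : Type*} [MeasurableSpace Z] (μ ν : Measure Z) : ℝ≥0∞ :=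
  if μ ≪ ν ∧ Integrable (llr μ ν) μ then ENNReal.ofReal (∫ z, llr μ ν z ∂μ) else ⊤

/-- Jensen–Shannon divergence: `D_JS(P‖Q) = (1/2)[D_KL(P‖M) + D_KL(Q‖M)]`
where `M = (1/2)(P + Q)`. -/
noncomputable def jsDiv {Z : Type*} [MeasurableSpace Z] (μ ν : Measure Z) : ℝ≥0∞ :=
  (klDiv μ ((2 : ℝ≥0∞)⁻¹ • (μ + ν)) + klDiv ν ((2 : ℝ≥0∞)⁻¹ • (μ + ν))) / 2

section Helpers

open InformationTheory in
lemma aux_pointwise {m r s : ℝ} (hm : 0 ≤ m) (hr : 0 ≤ r) (hs : 0 ≤ s)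
    (h : r * m + s * m = 2 * m) :
    m * klFun r + m * klFun s ≤ klFun (r * m) + klFun (s * m) := by
  rcases hm.eq_or_lt with rfl | hm
  · simp [klFun_zero]
  have h2 : r + s = 2 := by
    have : (r + s) * m = 2 * m := by linarith
    exact mul_right_cancel₀ hm.ne' this
  have key : ∀ t : ℝ, t * m * Real.log (t * m) = t * m * (Real.log t + Real.log m) := by
    intro t
    rcases eq_or_ne t 0 with rfl | ht
    · simp
    · rw [Real.log_mul ht hm.ne']
  have hk := klFun_nonneg hm.le
  simp only [klFun_apply] at hk ⊢
  rw [key r, key s]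
  obtain rfl : s = 2 - r := by linarith
  nlinarith

lemma aux_klDiv_eq {Z : Type*} [MeasurableSpace Z] (μ ν : Measure Z)
    [IsProbabilityMeasure μ] [IsProbabilityMeasure ν] :
    klDiv μ ν = InformationTheory.klDiv μ ν := by
  rw [klDiv, InformationTheory.klDiv_def]
  simp

lemma aux_prob {Z : Type*} [MeasurableSpace Z] (μ ν : Measure Z)
    [IsProbabilityMeasure μ] [IsProbabilityMeasure ν] :
    IsProbabilityMeasure ((2 : ℝ≥0∞)⁻¹ • (μ + ν)) := by
  constructor
  simp only [Measure.smul_apply, Measure.add_apply, measure_univ, smul_eq_mul]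
  rw [one_add_one_eq_two]
  exact ENNReal.inv_mul_cancel (by simp) (by simp)

lemma aux_ac_left {Z : Type*} [MeasurableSpace Z] (μ ν : Measure Z) :
    μ ≪ (2 : ℝ≥0∞)⁻¹ • (μ + ν) := by
  refine Measure.AbsolutelyContinuous.mk fun s _ h => ?_
  simp at h
  exact h.1

lemma aux_ac_right {Z : Type*} [MeasurableSpace Z] (μ ν : Measure Z) :
    ν ≪ (2 : ℝ≥0∞)⁻¹ • (μ + ν) := by
  rw [add_comm]
  exact aux_ac_left ν μ

open InformationTheory in
/-- The mixture is the best common reference measure. -/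
lemma aux_variational {Z : Type*} [MeasurableSpace Z] (P Q N : Measure Z)
    [IsProbabilityMeasure P] [IsProbabilityMeasure Q] [IsProbabilityMeasure N] :
    InformationTheory.klDiv P ((2 : ℝ≥0∞)⁻¹ • (P + Q))
      + InformationTheory.klDiv Q ((2 : ℝ≥0∞)⁻¹ • (P + Q))
      ≤ InformationTheory.klDiv P N + InformationTheory.klDiv Q N := by
  by_cases hP : P ≪ N
  swap
  · simp [InformationTheory.klDiv_of_not_ac hP]
  by_cases hQ : Q ≪ N
  swap
  · simp [InformationTheory.klDiv_of_not_ac hQ]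
  have hPM := aux_ac_left P Q
  have hQM := aux_ac_right P Q
  have hprob := aux_prob P Q
  have hMN : (2 : ℝ≥0∞)⁻¹ • (P + Q) ≪ N := by
    refine Measure.AbsolutelyContinuous.mk fun s _ h => ?_
    simp [hP h, hQ h]
  have hadd : ∀ᵐ z ∂N, P.rnDeriv N z + Q.rnDeriv N z
      = 2 * ((2 : ℝ≥0∞)⁻¹ • (P + Q)).rnDeriv N z := by
    have h1 := Measure.rnDeriv_add P Q N
    have h2 := Measure.rnDeriv_smul_left_of_ne_top (P + Q) N (r := (2 : ℝ≥0∞)⁻¹) (by simp)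
    filter_upwards [h1, h2] with z h1 h2
    rw [h2, Pi.smul_apply, h1, Pi.add_apply, smul_eq_mul, ← mul_assoc,
      ENNReal.mul_inv_cancel (by simp) (by simp), one_mul]
  generalize (2 : ℝ≥0∞)⁻¹ • (P + Q) = M at *
  rw [klDiv_eq_lintegral_klFun_of_ac hPM, klDiv_eq_lintegral_klFun_of_ac hQM,
    klDiv_eq_lintegral_klFun_of_ac hP, klDiv_eq_lintegral_klFun_of_ac hQ,
    ← lintegral_add_left (by fun_prop), ← lintegral_add_left (by fun_prop),
    ← lintegral_rnDeriv_mul hMN (by fun_prop)]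
  refine lintegral_mono_ae ?_
  filter_upwards [hadd, Measure.rnDeriv_mul_rnDeriv (κ := N) hPM,
    Measure.rnDeriv_mul_rnDeriv (κ := N) hQM, Measure.rnDeriv_ne_top M N,
    Measure.rnDeriv_ne_top P N, Measure.rnDeriv_ne_top Q N] with z ha h1 h2 hm hp hq
  rw [Pi.mul_apply] at h1 h2
  have e := congrArg ENNReal.toReal ha
  rw [ENNReal.toReal_add hp hq, ENNReal.toReal_mul] at e
  rw [← h1, ← h2, ENNReal.toReal_mul, ENNReal.toReal_mul] at e
  rw [← h1, ← h2, ENNReal.toReal_mul, ENNReal.toReal_mul,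
    ← ENNReal.ofReal_add (klFun_nonneg (by positivity)) (klFun_nonneg (by positivity)),
    ← ENNReal.ofReal_add (klFun_nonneg (by positivity)) (klFun_nonneg (by positivity))]
  nth_rewrite 1 [← ENNReal.ofReal_toReal hm]
  rw [← ENNReal.ofReal_mul (by positivity), mul_add]
  refine ENNReal.ofReal_le_ofReal (aux_pointwise (by positivity) (by positivity) (by positivity) ?_)
  simpa using e

open InformationTheory in
/-- Conditional KL as an integral. -/
lemma aux_conditional {X Y : Type*} [MeasurableSpace X] [MeasurableSpace Y]
    [StandardBorelSpace X] (μ : Measure Y) [IsProbabilityMeasure μ]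
    (κ η : Kernel Y X) [IsMarkovKernel κ] [IsMarkovKernel η] (h : ∀ y, κ y ≪ η y) :
    InformationTheory.klDiv (μ ⊗ₘ κ) (μ ⊗ₘ η)
      = ∫⁻ y, InformationTheory.klDiv (κ y) (η y) ∂μ := by
  have hac : μ ⊗ₘ κ ≪ μ ⊗ₘ η :=
    Measure.AbsolutelyContinuous.compProd_right (Filter.Eventually.of_forall h)
  have hw : η.withDensity (κ.rnDeriv η) = κ := by
    ext1 y
    exact Kernel.withDensity_rnDeriv_eq (h y)
  have : IsSFiniteKernel (η.withDensity (κ.rnDeriv η)) := by rw [hw]; infer_instance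
  have hm : Measurable (fun p : Y × X => κ.rnDeriv η p.1 p.2) := Kernel.measurable_rnDeriv κ η
  have e : μ ⊗ₘ κ = (μ ⊗ₘ η).withDensity (fun p => κ.rnDeriv η p.1 p.2) := by
    conv_lhs => rw [← hw]
    exact Measure.compProd_withDensity hm
  have hr : (μ ⊗ₘ κ).rnDeriv (μ ⊗ₘ η) =ᵐ[μ ⊗ₘ η] fun p => κ.rnDeriv η p.1 p.2 := by
    conv_lhs => rw [e]
    exact Measure.rnDeriv_withDensity _ hm
  rw [klDiv_eq_lintegral_klFun_of_ac hac]
  have h1 : ∫⁻ p, ENNReal.ofReal (klFun ((μ ⊗ₘ κ).rnDeriv (μ ⊗ₘ η) p).toReal) ∂(μ ⊗ₘ η)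
      = ∫⁻ p, ENNReal.ofReal (klFun (κ.rnDeriv η p.1 p.2).toReal) ∂(μ ⊗ₘ η) := by
    refine lintegral_congr_ae ?_
    filter_upwards [hr] with p hp
    rw [hp]
  rw [h1, Measure.lintegral_compProd (by fun_prop)]
  refine lintegral_congr fun y => ?_
  rw [klDiv_eq_lintegral_klFun_of_ac (h y)]
  refine lintegral_congr_ae ?_
  filter_upwards [Kernel.rnDeriv_eq_rnDeriv_measure (κ := κ) (η := η) (a := y)] with x hx
  rw [hx]

lemma aux_swap {X Y : Type*} [MeasurableSpace X] [MeasurableSpace Y]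
    (P : Measure (X × Y)) [IsProbabilityMeasure P] (κP : Kernel Y X) [IsMarkovKernel κP]
    (hκP : ∀ (A : Set X) (B : Set Y), MeasurableSet A → MeasurableSet B →
      P (A ×ˢ B) = ∫⁻ y in B, κP y A ∂(P.map Prod.snd)) :
    P = ((P.map Prod.snd) ⊗ₘ κP).map Prod.swap := by
  have : IsProbabilityMeasure (P.map Prod.snd) := Measure.isProbabilityMeasure_map (by fun_prop)
  refine Measure.ext_prod fun {A B} hA hB => ?_
  rw [Measure.map_apply measurable_swap (hA.prod hB), Set.preimage_swap_prod,
    Measure.compProd_apply_prod hB hA]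
  exact hκP A B hA hB

/-- The average of two kernels. -/
noncomputable def auxMix {X Y : Type*} [MeasurableSpace X] [MeasurableSpace Y]
    (κ η : Kernel Y X) : Kernel Y X where
  toFun y := (2 : ℝ≥0∞)⁻¹ • (κ y + η y)
  measurable' := by
    refine Measure.measurable_of_measurable_coe _ fun s hs => ?_
    simp only [Measure.smul_apply, Measure.add_apply, smul_eq_mul]
    exact ((κ.measurable_coe hs).add (η.measurable_coe hs)).const_mul _

end Helpers

/-- Decomposition of the joint Jensen–Shannon divergence: for probability
measures `P`, `Q` on a product `X × Y` of standard Borel spaces, with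
`Y`-marginals `P_Y`, `Q_Y` and conditional distributions (disintegrations)
`κP`, `κQ` of `X` given `y`,
`D_JS(P‖Q) ≤ D_JS(P_Y‖Q_Y) + E_{y∼P_Y} D_JS(P(·|y)‖Q(·|y))
  + E_{y∼Q_Y} D_JS(P(·|y)‖Q(·|y))`. -/
theorem jsDiv_le_marginal_add_conditional
    {X Y : Type*} [MeasurableSpace X] [MeasurableSpace Y]
    [StandardBorelSpace X] [StandardBorelSpace Y]
    (P Q : Measure (X × Y)) [IsProbabilityMeasure P] [IsProbabilityMeasure Q]
    (κP κQ : Kernel Y X) [IsMarkovKernel κP] [IsMarkovKernel κQ]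
    (hκP : ∀ (A : Set X) (B : Set Y), MeasurableSet A → MeasurableSet B →
      P (A ×ˢ B) = ∫⁻ y in B, κP y A ∂(P.map Prod.snd))
    (hκQ : ∀ (A : Set X) (B : Set Y), MeasurableSet A → MeasurableSet B →
      Q (A ×ˢ B) = ∫⁻ y in B, κQ y A ∂(Q.map Prod.snd)) :
    jsDiv P Q ≤
      jsDiv (P.map Prod.snd) (Q.map Prod.snd)
        + ∫⁻ y, jsDiv (κP y) (κQ y) ∂(P.map Prod.snd)
        + ∫⁻ y, jsDiv (κP y) (κQ y) ∂(Q.map Prod.snd) := by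
  have hPY : IsProbabilityMeasure (P.map Prod.snd) :=
    Measure.isProbabilityMeasure_map (by fun_prop)
  have hQY : IsProbabilityMeasure (Q.map Prod.snd) :=
    Measure.isProbabilityMeasure_map (by fun_prop)
  have hP := aux_swap P κP hκP
  have hQ := aux_swap Q κQ hκQ
  set PY := P.map Prod.snd with hPYdef
  set QY := Q.map Prod.snd with hQYdef
  have hMY := aux_prob PY QY
  have hM := aux_prob P Q
  have hη (y : Y) : auxMix κP κQ y = (2 : ℝ≥0∞)⁻¹ • (κP y + κQ y) := rfl
  have : IsMarkovKernel (auxMix κP κQ) := ⟨fun y => by rw [hη]; exact aux_prob _ _⟩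
  have hN : IsProbabilityMeasure
      (((((2 : ℝ≥0∞)⁻¹ • (PY + QY)) ⊗ₘ auxMix κP κQ)).map (Prod.swap : Y × X → X × Y)) :=
    Measure.isProbabilityMeasure_map (by fun_prop)
  have hvar := aux_variational P Q
    (((((2 : ℝ≥0∞)⁻¹ • (PY + QY)) ⊗ₘ auxMix κP κQ)).map (Prod.swap : Y × X → X × Y))
  have hPN : InformationTheory.klDiv P
      (((((2 : ℝ≥0∞)⁻¹ • (PY + QY)) ⊗ₘ auxMix κP κQ)).map (Prod.swap : Y × X → X × Y))
      ≤ InformationTheory.klDiv PY ((2 : ℝ≥0∞)⁻¹ • (PY + QY))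
        + ∫⁻ y, InformationTheory.klDiv (κP y) (auxMix κP κQ y) ∂PY := by
    conv_lhs => rw [hP]
    refine (InformationTheory.klDiv_map_le _ _ measurable_swap).trans ?_
    rw [InformationTheory.klDiv_compProd_eq_add,
      aux_conditional PY κP (auxMix κP κQ) (fun y => aux_ac_left _ _)]
  have hQN : InformationTheory.klDiv Q
      (((((2 : ℝ≥0∞)⁻¹ • (PY + QY)) ⊗ₘ auxMix κP κQ)).map (Prod.swap : Y × X → X × Y))
      ≤ InformationTheory.klDiv QY ((2 : ℝ≥0∞)⁻¹ • (PY + QY))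
        + ∫⁻ y, InformationTheory.klDiv (κQ y) (auxMix κP κQ y) ∂QY := by
    conv_lhs => rw [hQ]
    refine (InformationTheory.klDiv_map_le _ _ measurable_swap).trans ?_
    rw [InformationTheory.klDiv_compProd_eq_add,
      aux_conditional QY κQ (auxMix κP κQ) (fun y => aux_ac_right _ _)]
  have hjs (y : Y) : jsDiv (κP y) (κQ y) = (InformationTheory.klDiv (κP y) (auxMix κP κQ y)
      + InformationTheory.klDiv (κQ y) (auxMix κP κQ y)) / 2 := by
    have := aux_prob (κP y) (κQ y)
    rw [jsDiv, aux_klDiv_eq, aux_klDiv_eq, hη]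
  have hIP : (∫⁻ y, InformationTheory.klDiv (κP y) (auxMix κP κQ y) ∂PY) / 2
      ≤ ∫⁻ y, jsDiv (κP y) (κQ y) ∂PY := by
    rw [div_eq_mul_inv, ← lintegral_mul_const' _ _ (by simp)]
    refine lintegral_mono fun y => ?_
    rw [hjs, div_eq_mul_inv]
    gcongr
    exact le_self_add
  have hIQ : (∫⁻ y, InformationTheory.klDiv (κQ y) (auxMix κP κQ y) ∂QY) / 2
      ≤ ∫⁻ y, jsDiv (κP y) (κQ y) ∂QY := by
    rw [div_eq_mul_inv, ← lintegral_mul_const' _ _ (by simp)]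
    refine lintegral_mono fun y => ?_
    rw [hjs, div_eq_mul_inv]
    gcongr
    exact le_add_self
  refine le_trans ?_ (add_le_add (add_le_add le_rfl hIP) hIQ)
  rw [jsDiv, jsDiv, aux_klDiv_eq P, aux_klDiv_eq Q, aux_klDiv_eq PY, aux_klDiv_eq QY,
    ← ENNReal.add_div, ← ENNReal.add_div]
  refine ENNReal.div_le_div_right ((hvar.trans (add_le_add hPN hQN)).trans (le_of_eq ?_)) _
  ring
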